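/- Assume ΣT = 0. Then for all s,t ∈ [t0,T] the extended Bryson–Frazier identity holds: K(s,t|T) = Π(s)Φ_{F,Π}*(t,s)·1_{s ≤ t} + Φ_{F,Π}(s,t)Π(t)·1_{s > t} - Π(s) Λ(s,t|T) Π(t), where 1 denotes the indicator of the stated condition. -/

import Mathlib

/-!
Write `B = GQG*`, `C = H*R⁻¹H`, `A = F - BΣ`, `D = F - ΠC`, and let `X(τ) = Φ_{F,Σ}(τ,t₀)`,
`V(τ) = Φ_{F,Π}(τ,t₀)`, `Z = I + ΠΣ`. The two Riccati equations give `Z' = DZ - ZA`, so that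
`Z X = V N` with the constant `N = Z(t₀)` (`Z_intertwine`). Since `Σ(T) = 0`, evaluating at `T`
gives `N = V(T)⁻¹ X(T)`, so `N` and every `Z(τ)` are invertible, and
`Π₀^{1/2}(I + Π₀^{1/2}Σ(t₀)Π₀^{1/2})⁻¹Π₀^{1/2} = N⁻¹Π₀` by `push_through`.

The integrands of both kernels then have explicit primitives (`K_primitive`, `L_primitive`):
`(V⁻¹ Π X⁻*)' = N X⁻¹ B X⁻*` and `(V* Σ X)' = -V* C V N`. With the cocycle property of the
transition matrices (`IsTransition.comp`) this yields
`K(s,t|T) = X(s) N⁻¹ V(μ)⁻¹ Π(μ) X(μ)⁻* X(t)*` with `μ = min(s,t)` and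
`Λ(s,t|T) = V(s)⁻* V(M)* Σ(M) X(M) N⁻¹ V(t)⁻¹` with `M = max(s,t)`, and the identity becomes
matrix algebra with `Z⁻¹ = X N⁻¹ V⁻¹` and `Z⁻* = I - Σ Z⁻¹ Π` (`identity_le`, `identity_gt`).
The symmetry of `Π` and `Σ` is used throughout and follows from the constancy of
`V⁻¹(Π - Π*)V⁻*` and `X*(Σ - Σ*)X` (`fwd_symm`, `bwd_symm`).

All coefficients are merely integrable, so the differential equations hold almost everywhere and
every derivative computation is carried out for absolutely continuous functions (`ACD`, `MACD`):
products and inverses of such functions are again absolutely continuous, and the fundamental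
theorem of calculus applies to them. Uniqueness for linear equations is Grönwall's inequality with
an integrable coefficient (`ACD.eq_zero_of_abs_le`), and `H*R⁻¹H` is integrable because `R ⪰ rI`
bounds `R⁻¹` entrywise (`hrh_matII`); integrability of `GQG*` is read off from the forward Riccati
equation, all of whose other terms are integrable.
-/

open MeasureTheory Matrix Set Filter

noncomputable section

namespace SDEKernels

/-- Entrywise interval integral of a matrix-valued function. -/
def matInt {ι κ : Type*} (X : ℝ → Matrix ι κ ℝ) (a b : ℝ) : Matrix ι κ ℝ :=
  Matrix.of fun i j => ∫ τ in a..b, X τ i j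

/-- Entrywise continuity of a matrix-valued function on a set. -/
def MatContOn {ι κ : Type*} (X : ℝ → Matrix ι κ ℝ) (s : Set ℝ) : Prop :=
  ∀ i j, ContinuousOn (fun t => X t i j) s

/-- Entrywise interval integrability (matrix-valued `L¹` on `[a,b]`). -/
def MatII {ι κ : Type*} (X : ℝ → Matrix ι κ ℝ) (a b : ℝ) : Prop :=
  ∀ i j, IntervalIntegrable (fun t => X t i j) volume a b

/-- Entrywise square integrability (matrix-valued `L²` on `[a,b]`). -/
def MatL2 {ι κ : Type*} (X : ℝ → Matrix ι κ ℝ) (a b : ℝ) : Prop :=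
  ∀ i j, IntervalIntegrable (fun t => X t i j) volume a b ∧
    IntervalIntegrable (fun t => (X t i j) ^ 2) volume a b

/-- Componentwise square integrability (vector-valued `L²` on `[a,b]`). -/
def VecL2 {ι : Type*} (x : ℝ → ι → ℝ) (a b : ℝ) : Prop :=
  ∀ i, IntervalIntegrable (fun t => x t i) volume a b ∧
    IntervalIntegrable (fun t => (x t i) ^ 2) volume a b

/-- `G(τ) Q(τ) G(τ)*`. -/
def gqg {n d : ℕ} (G : ℝ → Matrix (Fin n) (Fin d) ℝ) (Q : ℝ → Matrix (Fin d) (Fin d) ℝ)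
    (τ : ℝ) : Matrix (Fin n) (Fin n) ℝ := G τ * Q τ * (G τ)ᵀ

/-- `H(τ)* R(τ)⁻¹ H(τ)`. -/
def hrh {n m : ℕ} (H : ℝ → Matrix (Fin m) (Fin n) ℝ) (R : ℝ → Matrix (Fin m) (Fin m) ℝ)
    (τ : ℝ) : Matrix (Fin n) (Fin n) ℝ := (H τ)ᵀ * (R τ)⁻¹ * H τ

/-- `Φ` is the state-transition matrix of `x' = A(s) x` on `[a,b]`, in the
Carathéodory (integral) sense: `Φ(t,t) = I` and `∂ₛ Φ(s,t) = A(s) Φ(s,t)`. -/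
def IsTransition {ι : Type*} [Fintype ι] [DecidableEq ι] (a b : ℝ)
    (A : ℝ → Matrix ι ι ℝ) (Φ : ℝ → ℝ → Matrix ι ι ℝ) : Prop :=
  ∀ t ∈ Icc a b,
    MatContOn (fun s => Φ s t) (Icc a b) ∧
    MatII (fun τ => A τ * Φ τ t) a b ∧
    ∀ s ∈ Icc a b, Φ s t = 1 + matInt (fun τ => A τ * Φ τ t) t s

/-- Carathéodory solution of the backward matrix Riccati equation
`-Σ' = ΣF + F*Σ - Σ G Q G* Σ + H* R⁻¹ H`, `Σ(b) = ST`, on `[a,b]`. -/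
def SolvesBackRiccati {n m d : ℕ} (a b : ℝ) (F : ℝ → Matrix (Fin n) (Fin n) ℝ)
    (G : ℝ → Matrix (Fin n) (Fin d) ℝ) (Q : ℝ → Matrix (Fin d) (Fin d) ℝ)
    (H : ℝ → Matrix (Fin m) (Fin n) ℝ) (R : ℝ → Matrix (Fin m) (Fin m) ℝ)
    (ST : Matrix (Fin n) (Fin n) ℝ) (S : ℝ → Matrix (Fin n) (Fin n) ℝ) : Prop :=
  MatContOn S (Icc a b) ∧
  MatII (fun τ => S τ * F τ + (F τ)ᵀ * S τ - S τ * gqg G Q τ * S τ + hrh H R τ) a b ∧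
  S b = ST ∧
  ∀ t ∈ Icc a b,
    S t = ST + matInt (fun τ => S τ * F τ + (F τ)ᵀ * S τ - S τ * gqg G Q τ * S τ + hrh H R τ) t b

/-- Carathéodory solution of the forward matrix Riccati equation
`Π' = FΠ + ΠF* - Π H* R⁻¹ H Π + G Q G*`, `Π(a) = P0`, on `[a,b]`. -/
def SolvesFwdRiccati {n m d : ℕ} (a b : ℝ) (F : ℝ → Matrix (Fin n) (Fin n) ℝ)
    (G : ℝ → Matrix (Fin n) (Fin d) ℝ) (Q : ℝ → Matrix (Fin d) (Fin d) ℝ)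
    (H : ℝ → Matrix (Fin m) (Fin n) ℝ) (R : ℝ → Matrix (Fin m) (Fin m) ℝ)
    (P0 : Matrix (Fin n) (Fin n) ℝ) (P : ℝ → Matrix (Fin n) (Fin n) ℝ) : Prop :=
  MatContOn P (Icc a b) ∧
  MatII (fun τ => F τ * P τ + P τ * (F τ)ᵀ - P τ * hrh H R τ * P τ + gqg G Q τ) a b ∧
  P a = P0 ∧
  ∀ t ∈ Icc a b,
    P t = P0 + matInt (fun τ => F τ * P τ + P τ * (F τ)ᵀ - P τ * hrh H R τ * P τ + gqg G Q τ) a t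

/-- Carathéodory solution of the perturbed two-point boundary value problem
`μ' = Fμ - GQG*ν + lμ`, `-ν' = F*ν + H*R⁻¹Hμ - lν`, `μ(a) = -P0 ν(a)`, `ν(b) = ST μ(b)`. -/
def SolvesTPBVP {n m d : ℕ} (a b : ℝ) (F : ℝ → Matrix (Fin n) (Fin n) ℝ)
    (G : ℝ → Matrix (Fin n) (Fin d) ℝ) (Q : ℝ → Matrix (Fin d) (Fin d) ℝ)
    (H : ℝ → Matrix (Fin m) (Fin n) ℝ) (R : ℝ → Matrix (Fin m) (Fin m) ℝ)
    (P0 ST : Matrix (Fin n) (Fin n) ℝ) (lμ lν : ℝ → Fin n → ℝ)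
    (μ ν : ℝ → Fin n → ℝ) : Prop :=
  ContinuousOn μ (Icc a b) ∧ ContinuousOn ν (Icc a b) ∧
  IntervalIntegrable (fun τ => (F τ).mulVec (μ τ) - (gqg G Q τ).mulVec (ν τ) + lμ τ) volume a b ∧
  IntervalIntegrable (fun τ => (F τ)ᵀ.mulVec (ν τ) + (hrh H R τ).mulVec (μ τ) - lν τ) volume a b ∧
  (∀ t ∈ Icc a b,
    μ t = μ a + ∫ τ in a..t, ((F τ).mulVec (μ τ) - (gqg G Q τ).mulVec (ν τ) + lμ τ)) ∧
  (∀ t ∈ Icc a b,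
    ν t = ν b + ∫ τ in t..b, ((F τ)ᵀ.mulVec (ν τ) + (hrh H R τ).mulVec (μ τ) - lν τ)) ∧
  μ a = -(P0.mulVec (ν a)) ∧
  ν b = ST.mulVec (μ b)

/-- The trajectory kernel `K(s,t|T)`. -/
def Kker {n d : ℕ} (t0 : ℝ) (G : ℝ → Matrix (Fin n) (Fin d) ℝ)
    (Q : ℝ → Matrix (Fin d) (Fin d) ℝ) (PhiFS : ℝ → ℝ → Matrix (Fin n) (Fin n) ℝ)
    (S : ℝ → Matrix (Fin n) (Fin n) ℝ) (P0h : Matrix (Fin n) (Fin n) ℝ)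
    (s t : ℝ) : Matrix (Fin n) (Fin n) ℝ :=
  PhiFS s t0 * P0h * (1 + P0h * S t0 * P0h)⁻¹ * P0h * (PhiFS t t0)ᵀ +
    matInt (fun τ => PhiFS s τ * gqg G Q τ * (PhiFS t τ)ᵀ) t0 (min s t)

/-- The information kernel `Λ(s,t|T)`. -/
def Lker {n m : ℕ} (T : ℝ) (H : ℝ → Matrix (Fin m) (Fin n) ℝ)
    (R : ℝ → Matrix (Fin m) (Fin m) ℝ) (PhiFP : ℝ → ℝ → Matrix (Fin n) (Fin n) ℝ)
    (P : ℝ → Matrix (Fin n) (Fin n) ℝ) (STh : Matrix (Fin n) (Fin n) ℝ)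
    (s t : ℝ) : Matrix (Fin n) (Fin n) ℝ :=
  (PhiFP T s)ᵀ * STh * (1 + STh * P T * STh)⁻¹ * STh * PhiFP T t +
    matInt (fun τ => (PhiFP τ s)ᵀ * hrh H R τ * PhiFP τ t) (max s t) T


/-- Carathéodory solution of the forward linear ODE `x' = A(τ) x` (vector-valued). -/
def SolvesLinFwd {n : ℕ} (a b : ℝ) (A : ℝ → Matrix (Fin n) (Fin n) ℝ)
    (x : ℝ → Fin n → ℝ) : Prop :=
  ContinuousOn x (Icc a b) ∧
  IntervalIntegrable (fun τ => (A τ).mulVec (x τ)) volume a b ∧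
  ∀ t ∈ Icc a b, x t = x a + ∫ τ in a..t, (A τ).mulVec (x τ)

/-- Carathéodory solution of the backward linear ODE `-χ' = F(σ)* χ` on `[a,c]`
with terminal value `χ(c) = z`. -/
def SolvesChi {n : ℕ} (a c : ℝ) (F : ℝ → Matrix (Fin n) (Fin n) ℝ) (z : Fin n → ℝ)
    (χ : ℝ → Fin n → ℝ) : Prop :=
  ContinuousOn χ (Icc a c) ∧
  IntervalIntegrable (fun σ => (F σ)ᵀ.mulVec (χ σ)) volume a c ∧
  χ c = z ∧
  ∀ τ ∈ Icc a c, χ τ = z + ∫ σ in τ..c, (F σ)ᵀ.mulVec (χ σ)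

/-- Carathéodory solution of the impulse-response two-point boundary value problem at `t`:
`x' = Fx - GQG*q + GQG*χ·1_{τ<t}`, `-q' = F*q + H*R⁻¹Hx`,
`x(a) = -P0 q(a) + P0 χ(a)`, `q(b) = ST x(b)`. -/
def SolvesImpulseSystem {n m d : ℕ} (a b t : ℝ) (F : ℝ → Matrix (Fin n) (Fin n) ℝ)
    (G : ℝ → Matrix (Fin n) (Fin d) ℝ) (Q : ℝ → Matrix (Fin d) (Fin d) ℝ)
    (H : ℝ → Matrix (Fin m) (Fin n) ℝ) (R : ℝ → Matrix (Fin m) (Fin m) ℝ)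
    (P0 ST : Matrix (Fin n) (Fin n) ℝ) (χ x q : ℝ → Fin n → ℝ) : Prop :=
  ContinuousOn x (Icc a b) ∧ ContinuousOn q (Icc a b) ∧
  IntervalIntegrable (fun τ => (F τ).mulVec (x τ) - (gqg G Q τ).mulVec (q τ) +
    (if τ < t then (gqg G Q τ).mulVec (χ τ) else 0)) volume a b ∧
  IntervalIntegrable (fun τ => (F τ)ᵀ.mulVec (q τ) + (hrh H R τ).mulVec (x τ)) volume a b ∧
  (∀ s ∈ Icc a b, x s = x a + ∫ τ in a..s, ((F τ).mulVec (x τ) - (gqg G Q τ).mulVec (q τ) +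
    (if τ < t then (gqg G Q τ).mulVec (χ τ) else 0))) ∧
  (∀ s ∈ Icc a b, q s = q b + ∫ τ in s..b, ((F τ)ᵀ.mulVec (q τ) + (hrh H R τ).mulVec (x τ))) ∧
  x a = -(P0.mulVec (q a)) + P0.mulVec (χ a) ∧
  q b = ST.mulVec (x b)

/-- Right-hand side of the adjoint equation `-λ' = F*λ + H*R⁻¹H γ`. -/
def hamRHS {n m : ℕ} (F : ℝ → Matrix (Fin n) (Fin n) ℝ)
    (H : ℝ → Matrix (Fin m) (Fin n) ℝ) (R : ℝ → Matrix (Fin m) (Fin m) ℝ)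
    (gam lam : ℝ → Fin n → ℝ) (τ : ℝ) : Fin n → ℝ :=
  (F τ)ᵀ.mulVec (lam τ) + (hrh H R τ).mulVec (gam τ)

/-- Carathéodory solution `(γ, λ)` of the Hamiltonian system with a jump of size `lamb` at `s`
(and terminal condition appropriate to `ΣT = 0`):
`γ' = Fγ - GQG*λ`, `-λ' = F*λ + H*R⁻¹Hγ` on `[t0,s)` and `(s,T]`, `γ(t0) = -Π0 λ(t0)`,
`λ(T) = 0` if `s < T` (`λ(T) = lamb` if `s = T`), and `λ(s) - λ(s⁺) = lamb` if `s < T`. -/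
def SolvesHamJump {n m d : ℕ} (t0 T s : ℝ) (F : ℝ → Matrix (Fin n) (Fin n) ℝ)
    (G : ℝ → Matrix (Fin n) (Fin d) ℝ) (Q : ℝ → Matrix (Fin d) (Fin d) ℝ)
    (H : ℝ → Matrix (Fin m) (Fin n) ℝ) (R : ℝ → Matrix (Fin m) (Fin m) ℝ)
    (P0 : Matrix (Fin n) (Fin n) ℝ) (lamb : Fin n → ℝ) (gam lam : ℝ → Fin n → ℝ) : Prop :=
  ContinuousOn gam (Icc t0 T) ∧
  IntervalIntegrable (fun τ => (F τ).mulVec (gam τ) - (gqg G Q τ).mulVec (lam τ)) volume t0 T ∧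
  IntervalIntegrable (hamRHS F H R gam lam) volume t0 T ∧
  gam t0 = -(P0.mulVec (lam t0)) ∧
  (∀ t ∈ Icc t0 T,
    gam t = gam t0 + ∫ τ in t0..t, ((F τ).mulVec (gam τ) - (gqg G Q τ).mulVec (lam τ))) ∧
  ContinuousOn lam (Icc t0 s) ∧
  (∀ t ∈ Icc t0 s, lam t = lam s + ∫ τ in t..s, hamRHS F H R gam lam τ) ∧
  (s < T →
    ContinuousOn lam (Ioc s T) ∧ lam T = 0 ∧
    (∀ t ∈ Ioc s T, lam t = ∫ τ in t..T, hamRHS F H R gam lam τ) ∧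
    Tendsto lam (nhdsWithin s (Ioi s)) (nhds (lam s - lamb))) ∧
  (s = T → lam T = lamb)

/-- Carathéodory solution of the filter equation
`r' = (F - Π H* R⁻¹ H) r + Π H* R⁻¹ g`, `r(t0) = 0`. -/
def SolvesRODE {n m : ℕ} (a b : ℝ) (F : ℝ → Matrix (Fin n) (Fin n) ℝ)
    (H : ℝ → Matrix (Fin m) (Fin n) ℝ) (R : ℝ → Matrix (Fin m) (Fin m) ℝ)
    (P : ℝ → Matrix (Fin n) (Fin n) ℝ) (g : ℝ → Fin m → ℝ) (rr : ℝ → Fin n → ℝ) : Prop :=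
  ContinuousOn rr (Icc a b) ∧
  IntervalIntegrable (fun τ => (F τ - P τ * hrh H R τ).mulVec (rr τ) +
    (P τ * (H τ)ᵀ * (R τ)⁻¹).mulVec (g τ)) volume a b ∧
  rr a = 0 ∧
  ∀ t ∈ Icc a b, rr t = ∫ τ in a..t, ((F τ - P τ * hrh H R τ).mulVec (rr τ) +
    (P τ * (H τ)ᵀ * (R τ)⁻¹).mulVec (g τ))

/-- Carathéodory solution of the controlled ODE `x' = F x + G Q^{1/2} u`, `x(t0) = Π0^{1/2} ξ`. -/
def SolvesControlODE {n d : ℕ} (a b : ℝ) (F : ℝ → Matrix (Fin n) (Fin n) ℝ)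
    (G : ℝ → Matrix (Fin n) (Fin d) ℝ) (Qh : ℝ → Matrix (Fin d) (Fin d) ℝ)
    (P0h : Matrix (Fin n) (Fin n) ℝ) (ξ : Fin n → ℝ) (u : ℝ → Fin d → ℝ)
    (x : ℝ → Fin n → ℝ) : Prop :=
  ContinuousOn x (Icc a b) ∧
  IntervalIntegrable (fun σ => (F σ).mulVec (x σ) + (G σ * Qh σ).mulVec (u σ)) volume a b ∧
  x a = P0h.mulVec ξ ∧
  ∀ τ ∈ Icc a b, x τ = x a + ∫ σ in a..τ, ((F σ).mulVec (x σ) + (G σ * Qh σ).mulVec (u σ))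

/-- The least-squares objective of the deterministic smoothing problem. -/
def Jfun {n m d : ℕ} (a b : ℝ) (H : ℝ → Matrix (Fin m) (Fin n) ℝ)
    (R : ℝ → Matrix (Fin m) (Fin m) ℝ) (ST : Matrix (Fin n) (Fin n) ℝ)
    (ytil : ℝ → Fin m → ℝ) (ξ : Fin n → ℝ) (u : ℝ → Fin d → ℝ) (x : ℝ → Fin n → ℝ) : ℝ :=
  dotProduct ξ ξ + dotProduct (ST.mulVec (x b)) (x b)
    + (∫ τ in a..b, dotProduct (u τ) (u τ))
    + (∫ τ in a..b, dotProduct ((hrh H R τ).mulVec (x τ)) (x τ))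
    - 2 * ∫ τ in a..b, dotProduct (ytil τ) (((R τ)⁻¹ * H τ).mulVec (x τ))
/-- The Hamiltonian matrix `[[F, -GQG*], [-H*R⁻¹H, -F*]]`. -/
def hamMat {n m d : ℕ} (F : ℝ → Matrix (Fin n) (Fin n) ℝ)
    (G : ℝ → Matrix (Fin n) (Fin d) ℝ) (Q : ℝ → Matrix (Fin d) (Fin d) ℝ)
    (H : ℝ → Matrix (Fin m) (Fin n) ℝ) (R : ℝ → Matrix (Fin m) (Fin m) ℝ) (t : ℝ) :
    Matrix (Fin n ⊕ Fin n) (Fin n ⊕ Fin n) ℝ :=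
  Matrix.fromBlocks (F t) (-(gqg G Q t)) (-(hrh H R t)) (-(F t)ᵀ)

/-- `Φ̄(T,t) = [[I,0],[-ΣT,I]] · Φ_𝐇(T,t)`. -/
def phiBar {n : ℕ} (ST : Matrix (Fin n) (Fin n) ℝ)
    (PhiH : ℝ → ℝ → Matrix (Fin n ⊕ Fin n) (Fin n ⊕ Fin n) ℝ) (T t : ℝ) :
    Matrix (Fin n ⊕ Fin n) (Fin n ⊕ Fin n) ℝ :=
  Matrix.fromBlocks 1 0 (-ST) 1 * PhiH T t

/-! ### Calculus of absolutely continuous functions -/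

/-- `f` is absolutely continuous on `[a,b]` with almost everywhere derivative `f'`. -/
def ACD (f f' : ℝ → ℝ) (a b : ℝ) : Prop :=
  AbsolutelyContinuousOnInterval f a b ∧ ∀ᵐ x, x ∈ Ioo a b → HasDerivAt f (f' x) x

theorem ac_const (c a b : ℝ) : AbsolutelyContinuousOnInterval (fun _ : ℝ => c) a b :=
  ((LipschitzWith.const (α := ℝ) c).lipschitzOnWith (s := uIcc a b)).absolutelyContinuousOnInterval

theorem ac_congr {f g : ℝ → ℝ} {a b : ℝ} (hf : AbsolutelyContinuousOnInterval f a b)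
    (h : ∀ x ∈ uIcc a b, g x = f x) : AbsolutelyContinuousOnInterval g a b := by
  rw [absolutelyContinuousOnInterval_iff] at hf ⊢
  intro ε hε
  obtain ⟨δ, hδ, H⟩ := hf ε hε
  refine ⟨δ, hδ, fun E hE hl => ?_⟩
  rw [Finset.sum_congr rfl fun i hi => by rw [h _ (hE.1 i hi).1, h _ (hE.1 i hi).2]]
  exact H E hE hl

/-- Post-composition with a function that is Lipschitz on the range preserves absolute
continuity. -/
theorem ac_comp {f g : ℝ → ℝ} {a b K : ℝ} (hf : AbsolutelyContinuousOnInterval f a b)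
    (hK : 0 ≤ K) (h : ∀ x ∈ uIcc a b, ∀ y ∈ uIcc a b, dist (g (f x)) (g (f y)) ≤ K * dist (f x) (f y)) :
    AbsolutelyContinuousOnInterval (fun x => g (f x)) a b := by
  rw [absolutelyContinuousOnInterval_iff] at hf ⊢
  intro ε hε
  obtain ⟨δ, hδ, H⟩ := hf (ε / (K + 1)) (by positivity)
  refine ⟨δ, hδ, fun E hE hl => ?_⟩
  have h1 := H E hE hl
  calc _ ≤ ∑ i ∈ Finset.range E.1, K * dist (f (E.2 i).1) (f (E.2 i).2) :=
        Finset.sum_le_sum fun i hi => h _ (hE.1 i hi).1 _ (hE.1 i hi).2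
    _ = K * ∑ i ∈ Finset.range E.1, dist (f (E.2 i).1) (f (E.2 i).2) := (Finset.mul_sum _ _ _).symm
    _ ≤ K * (ε / (K + 1)) := by gcongr
    _ < (K + 1) * (ε / (K + 1)) := by gcongr; linarith
    _ = ε := by field_simp

theorem ac_inv {f : ℝ → ℝ} {a b : ℝ} (hf : AbsolutelyContinuousOnInterval f a b)
    (h0 : ∀ x ∈ uIcc a b, f x ≠ 0) : AbsolutelyContinuousOnInterval (fun x => (f x)⁻¹) a b := by
  obtain ⟨C, hC⟩ := isCompact_uIcc.exists_bound_of_continuousOn (hf.continuousOn.inv₀ h0)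
  have hC0 : 0 ≤ C := (norm_nonneg _).trans (hC a left_mem_uIcc)
  refine ac_comp (g := fun y => y⁻¹) hf (mul_nonneg hC0 hC0) fun x hx y hy => ?_
  have e : (f x)⁻¹ - (f y)⁻¹ = -((f x)⁻¹ * (f y)⁻¹ * (f x - f y)) := by
    have := h0 x hx; have := h0 y hy; field_simp; ring
  rw [Real.dist_eq, Real.dist_eq, e, abs_neg, abs_mul, abs_mul]
  gcongr
  · exact hC x hx
  · exact hC y hy

theorem ac_exp {f : ℝ → ℝ} {a b : ℝ} (hf : AbsolutelyContinuousOnInterval f a b) :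
    AbsolutelyContinuousOnInterval (fun x => Real.exp (f x)) a b := by
  obtain ⟨C, hC⟩ := hf.exists_bound
  obtain ⟨K, hK⟩ := (Real.contDiff_exp.contDiffOn (n := 1) (s := Icc (-C) C)).exists_lipschitzOnWith
    (by decide) (convex_Icc _ _) isCompact_Icc
  refine ac_comp (g := Real.exp) hf K.2 fun x hx y hy => ?_
  exact hK.dist_le_mul _ (abs_le.1 (hC x hx)) _ (abs_le.1 (hC y hy))

theorem ac_sum {ι : Type*} (s : Finset ι) {f : ι → ℝ → ℝ} {a b : ℝ}
    (h : ∀ i ∈ s, AbsolutelyContinuousOnInterval (f i) a b) :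
    AbsolutelyContinuousOnInterval (fun x => ∑ i ∈ s, f i x) a b := by
  classical
  induction s using Finset.induction_on with
  | empty => simpa using ac_const 0 a b
  | insert i s hi ih =>
    simp only [Finset.sum_insert hi]
    exact (h i (by simp)).fun_add (ih fun j hj => h j (by simp [hj]))

theorem ac_prod {ι : Type*} (s : Finset ι) {f : ι → ℝ → ℝ} {a b : ℝ}
    (h : ∀ i ∈ s, AbsolutelyContinuousOnInterval (f i) a b) :
    AbsolutelyContinuousOnInterval (fun x => ∏ i ∈ s, f i x) a b := by
  classical
  induction s using Finset.induction_on with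
  | empty => simpa using ac_const 1 a b
  | insert i s hi ih =>
    simp only [Finset.prod_insert hi]
    exact (h i (by simp)).fun_mul (ih fun j hj => h j (by simp [hj]))

theorem ac_det {ι : Type*} [Fintype ι] [DecidableEq ι] {X : ℝ → Matrix ι ι ℝ} {a b : ℝ}
    (h : ∀ i j, AbsolutelyContinuousOnInterval (fun t => X t i j) a b) :
    AbsolutelyContinuousOnInterval (fun t => (X t).det) a b := by
  simp only [Matrix.det_apply']
  exact ac_sum _ fun σ _ => (ac_const _ a b).fun_mul (ac_prod _ fun i _ => h _ _)

theorem ac_matrix_inv {ι : Type*} [Fintype ι] [DecidableEq ι] {X : ℝ → Matrix ι ι ℝ} {a b : ℝ}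
    (h : ∀ i j, AbsolutelyContinuousOnInterval (fun t => X t i j) a b)
    (h0 : ∀ t ∈ uIcc a b, (X t).det ≠ 0) (i j : ι) :
    AbsolutelyContinuousOnInterval (fun t => (X t)⁻¹ i j) a b := by
  simp only [Matrix.inv_def, Ring.inverse_eq_inv', Matrix.smul_apply, smul_eq_mul,
    Matrix.adjugate_apply]
  refine (ac_inv (ac_det h) h0).fun_mul (ac_det fun k l => ?_)
  by_cases hk : k = j
  · subst hk
    simpa using ac_const _ a b
  · simpa [Matrix.updateRow_ne hk] using h k l

theorem ae_uIcc_of_Ioo {a b r s : ℝ} {p : ℝ → Prop} (hr : r ∈ Icc a b) (hs : s ∈ Icc a b)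
    (h : ∀ᵐ x, x ∈ Ioo a b → p x) : ∀ᵐ x, x ∈ uIcc r s → p x := by
  have h₁ : ∀ᵐ x : ℝ, x ≠ a := by simp [ae_iff, measure_singleton]
  have h₂ : ∀ᵐ x : ℝ, x ≠ b := by simp [ae_iff, measure_singleton]
  filter_upwards [h, h₁, h₂] with x hx ha hb hm
  have := uIcc_subset_Icc hr hs hm
  exact hx ⟨lt_of_le_of_ne this.1 ha.symm, lt_of_le_of_ne this.2 hb⟩

theorem ac_mono {f : ℝ → ℝ} {a b r s : ℝ} (hab : a ≤ b) (hf : AbsolutelyContinuousOnInterval f a b)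
    (hr : r ∈ Icc a b) (hs : s ∈ Icc a b) : AbsolutelyContinuousOnInterval f r s :=
  hf.mono (by rw [uIcc_of_le hab]; exact uIcc_subset_Icc hr hs)

/-- The fundamental theorem of calculus for absolutely continuous functions. -/
theorem ACD.integral_eq {f f' : ℝ → ℝ} {a b r s : ℝ} (hf : ACD f f' a b) (hab : a ≤ b)
    (hr : r ∈ Icc a b) (hs : s ∈ Icc a b) : ∫ x in r..s, f' x = f s - f r := by
  rw [← (ac_mono hab hf.1 hr hs).integral_deriv_eq_sub]
  apply intervalIntegral.integral_congr_ae
  filter_upwards [ae_uIcc_of_Ioo hr hs hf.2] with x hx hm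
  exact (hx (uIoc_subset_uIcc hm)).deriv.symm

/-- Indefinite integrals of integrable functions are absolutely continuous (Lebesgue
differentiation); the base point `c` may be anywhere in `[a,b]`. -/
theorem ACD.of_integral {f f' : ℝ → ℝ} {a b c k : ℝ} (hab : a ≤ b) (hc : c ∈ Icc a b)
    (hi : IntervalIntegrable f' volume a b) (h : ∀ t ∈ Icc a b, f t = k + ∫ x in c..t, f' x) :
    ACD f f' a b := by
  have hc' : c ∈ uIcc a b := by rwa [uIcc_of_le hab]
  constructor
  · refine ac_congr ((ac_const k a b).fun_add
      (hi.absolutelyContinuousOnInterval_intervalIntegral hc')) ?_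
    rwa [uIcc_of_le hab]
  · filter_upwards [hi.ae_hasDerivAt_integral] with x hx hm
    have h1 := (hx (by rw [uIcc_of_le hab]; exact Ioo_subset_Icc_self hm) c hc').const_add k
    refine h1.congr_of_eventuallyEq ?_
    filter_upwards [isOpen_Ioo.mem_nhds hm] with y hy using h y (Ioo_subset_Icc_self hy)

theorem ACD.mul {f f' g g' : ℝ → ℝ} {a b : ℝ} (hf : ACD f f' a b) (hg : ACD g g' a b) :
    ACD (fun x => f x * g x) (fun x => f' x * g x + f x * g' x) a b := by
  refine ⟨hf.1.fun_mul hg.1, ?_⟩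
  filter_upwards [hf.2, hg.2] with x h1 h2 hm using (h1 hm).mul (h2 hm)

theorem ACD.add {f f' g g' : ℝ → ℝ} {a b : ℝ} (hf : ACD f f' a b) (hg : ACD g g' a b) :
    ACD (fun x => f x + g x) (fun x => f' x + g' x) a b := by
  refine ⟨hf.1.fun_add hg.1, ?_⟩
  filter_upwards [hf.2, hg.2] with x h1 h2 hm using (h1 hm).add (h2 hm)

theorem ACD.sub {f f' g g' : ℝ → ℝ} {a b : ℝ} (hf : ACD f f' a b) (hg : ACD g g' a b) :
    ACD (fun x => f x - g x) (fun x => f' x - g' x) a b := by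
  refine ⟨hf.1.fun_sub hg.1, ?_⟩
  filter_upwards [hf.2, hg.2] with x h1 h2 hm using (h1 hm).sub (h2 hm)

theorem ACD.const (c a b : ℝ) : ACD (fun _ => c) (fun _ => 0) a b :=
  ⟨ac_const c a b, .of_forall fun x _ => hasDerivAt_const x c⟩

theorem ACD.sum {ι : Type*} (s : Finset ι) {f f' : ι → ℝ → ℝ} {a b : ℝ}
    (h : ∀ i ∈ s, ACD (f i) (f' i) a b) :
    ACD (fun x => ∑ i ∈ s, f i x) (fun x => ∑ i ∈ s, f' i x) a b := by
  classical
  induction s using Finset.induction_on with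
  | empty => simpa using ACD.const 0 a b
  | insert i s hi ih =>
    simp only [Finset.sum_insert hi]
    exact (h i (by simp)).add (ih fun j hj => h j (by simp [hj]))

theorem ACD.exp {f f' : ℝ → ℝ} {a b : ℝ} (hf : ACD f f' a b) :
    ACD (fun x => Real.exp (f x)) (fun x => Real.exp (f x) * f' x) a b := by
  refine ⟨ac_exp hf.1, ?_⟩
  filter_upwards [hf.2] with x h1 hm using (h1 hm).exp

/-- Grönwall's inequality with an integrable coefficient and zero initial value, in both time
directions: `u · exp (∓∫ k)` is monotone away from `c`. -/
theorem ACD.eq_zero_of_abs_le {u u' k : ℝ → ℝ} {a b c : ℝ} (hab : a ≤ b) (hc : c ∈ Icc a b)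
    (hu : ACD u u' a b) (hk : IntervalIntegrable k volume a b)
    (h0 : ∀ t ∈ Icc a b, 0 ≤ u t) (hbd : ∀ t ∈ Icc a b, |u' t| ≤ k t * u t) (huc : u c = 0) :
    ∀ t ∈ Icc a b, u t = 0 := by
  intro t ht
  have hK : ACD (fun x => ∫ y in c..x, k y) k a b :=
    ACD.of_integral (k := 0) hab hc hk fun t _ => by simp
  refine le_antisymm ?_ (h0 t ht)
  rcases le_total c t with hct | hct
  · have hE := (ACD.mul hu ((ACD.const 0 a b).sub hK).exp).integral_eq hab hc ht
    have : ∫ x in c..t, (u' x * Real.exp (0 - ∫ y in c..x, k y) +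
        u x * (Real.exp (0 - ∫ y in c..x, k y) * (0 - k x))) ≤ 0 := by
      rw [← neg_nonneg, ← intervalIntegral.integral_neg]
      refine intervalIntegral.integral_nonneg hct fun x hx => ?_
      have := (abs_le.1 (hbd x ⟨hc.1.trans hx.1, hx.2.trans ht.2⟩)).2
      nlinarith [Real.exp_pos (0 - ∫ y in c..x, k y)]
    rw [hE, huc, zero_mul, sub_zero] at this
    exact nonpos_of_mul_nonpos_left this (Real.exp_pos _)
  · have hE := (ACD.mul hu hK.exp).integral_eq hab ht hc
    have : 0 ≤ ∫ x in t..c, (u' x * Real.exp (∫ y in c..x, k y) +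
        u x * (Real.exp (∫ y in c..x, k y) * k x)) := by
      refine intervalIntegral.integral_nonneg hct fun x hx => ?_
      have := (abs_le.1 (hbd x ⟨ht.1.trans hx.1, hx.2.trans hc.2⟩)).1
      nlinarith [Real.exp_pos (∫ y in c..x, k y)]
    rw [hE, huc, zero_mul, zero_sub, neg_nonneg] at this
    exact nonpos_of_mul_nonpos_left this (Real.exp_pos _)

/-! ### Matrix-valued absolutely continuous functions -/

/-- `X` is entrywise absolutely continuous on `[a,b]` with almost everywhere derivative `X'`. -/
def MACD {ι κ : Type*} (X X' : ℝ → Matrix ι κ ℝ) (a b : ℝ) : Prop :=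
  ∀ i j, ACD (fun t => X t i j) (fun t => X' t i j) a b

section MACD

variable {ι κ l : Type*} {a b : ℝ}

theorem MACD.of_integral {X X' : ℝ → Matrix ι κ ℝ} {c : ℝ} {k : Matrix ι κ ℝ} (hab : a ≤ b)
    (hc : c ∈ Icc a b) (hi : MatII X' a b) (h : ∀ t ∈ Icc a b, X t = k + matInt X' c t) :
    MACD X X' a b := fun i j =>
  ACD.of_integral (k := k i j) hab hc (hi i j) fun t ht => by rw [h t ht]; rfl

theorem MACD.matInt_eq {X X' : ℝ → Matrix ι κ ℝ} (h : MACD X X' a b) (hab : a ≤ b) {r s : ℝ}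
    (hr : r ∈ Icc a b) (hs : s ∈ Icc a b) : matInt X' r s = X s - X r := by
  ext i j
  exact (h i j).integral_eq hab hr hs

theorem MACD.congr {X X' Y' : ℝ → Matrix ι κ ℝ} (h : MACD X X' a b)
    (h' : ∀ t ∈ Icc a b, X' t = Y' t) : MACD X Y' a b := fun i j => by
  refine ⟨(h i j).1, ?_⟩
  filter_upwards [(h i j).2] with x hx hm
  rw [← h' x (Ioo_subset_Icc_self hm)]
  exact hx hm

theorem MACD.eq_of_deriv_eq_zero {X X' : ℝ → Matrix ι κ ℝ} (h : MACD X X' a b) (hab : a ≤ b)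
    (h' : ∀ t ∈ Icc a b, X' t = 0) {r s : ℝ} (hr : r ∈ Icc a b) (hs : s ∈ Icc a b) :
    X r = X s := by
  have := (h.congr (Y' := fun _ => 0) h').matInt_eq hab hs hr
  rw [← sub_eq_zero, ← this]
  ext i j
  simp [matInt]

theorem MACD.const (C : Matrix ι κ ℝ) : MACD (fun _ => C) (fun _ => 0) a b :=
  fun i j => ACD.const (C i j) a b

theorem MACD.add {X X' Y Y' : ℝ → Matrix ι κ ℝ} (hX : MACD X X' a b) (hY : MACD Y Y' a b) :
    MACD (fun t => X t + Y t) (fun t => X' t + Y' t) a b := fun i j => (hX i j).add (hY i j)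

theorem MACD.sub {X X' Y Y' : ℝ → Matrix ι κ ℝ} (hX : MACD X X' a b) (hY : MACD Y Y' a b) :
    MACD (fun t => X t - Y t) (fun t => X' t - Y' t) a b := fun i j => (hX i j).sub (hY i j)

theorem MACD.transpose {X X' : ℝ → Matrix ι κ ℝ} (hX : MACD X X' a b) :
    MACD (fun t => (X t)ᵀ) (fun t => (X' t)ᵀ) a b := fun i j => hX j i

theorem MACD.mul [Fintype κ] {X X' : ℝ → Matrix ι κ ℝ} {Y Y' : ℝ → Matrix κ l ℝ}
    (hX : MACD X X' a b) (hY : MACD Y Y' a b) :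
    MACD (fun t => X t * Y t) (fun t => X' t * Y t + X t * Y' t) a b := fun i j => by
  simp only [Matrix.add_apply, Matrix.mul_apply, ← Finset.sum_add_distrib]
  exact ACD.sum _ fun k _ => (hX i k).mul (hY k j)

/-- The inverse is entrywise absolutely continuous by Cramer's rule; differentiating `X⁻¹ X = 1`
almost everywhere then identifies its derivative. -/
theorem MACD.inv [Fintype ι] [DecidableEq ι] {X X' : ℝ → Matrix ι ι ℝ} (hX : MACD X X' a b)
    (hab : a ≤ b) (h0 : ∀ t ∈ Icc a b, IsUnit (X t).det) :
    MACD (fun t => (X t)⁻¹) (fun t => -((X t)⁻¹ * X' t * (X t)⁻¹)) a b := by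
  have hac := ac_matrix_inv (fun i j => (hX i j).1)
    (by rw [uIcc_of_le hab]; exact fun t ht => (h0 t ht).ne_zero)
  have hD : MACD (fun t => (X t)⁻¹) (fun t => Matrix.of fun i j => deriv (fun τ => (X τ)⁻¹ i j) t)
      a b := fun i j => by
    refine ⟨hac i j, ?_⟩
    filter_upwards [(hac i j).ae_differentiableAt] with x hx hm
    exact (hx (by rw [uIcc_of_le hab]; exact Ioo_subset_Icc_self hm)).hasDerivAt
  have hall : ∀ᵐ x, ∀ i j, x ∈ Ioo a b → HasDerivAt (fun t => ((X t)⁻¹ * X t) i j)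
      (((Matrix.of fun i j => deriv (fun τ => (X τ)⁻¹ i j) x) * X x + (X x)⁻¹ * X' x) i j) x :=
    ae_all_iff.2 fun i => ae_all_iff.2 fun j => ((hD.mul hX) i j).2
  intro i j
  refine ⟨hac i j, ?_⟩
  filter_upwards [hall, (hD i j).2] with x hx hd hm
  have key : (Matrix.of fun i j => deriv (fun τ => (X τ)⁻¹ i j) x) * X x + (X x)⁻¹ * X' x = 0 := by
    ext k m
    refine (hx k m hm).unique ((hasDerivAt_const x ((1 : Matrix ι ι ℝ) k m)).congr_of_eventuallyEq ?_)
    filter_upwards [isOpen_Ioo.mem_nhds hm] with y hy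
    rw [Matrix.nonsing_inv_mul _ (h0 y (Ioo_subset_Icc_self hy))]
  have h1 : (Matrix.of fun i j => deriv (fun τ => (X τ)⁻¹ i j) x)
      = -((X x)⁻¹ * X' x * (X x)⁻¹) := by
    have hu := h0 x (Ioo_subset_Icc_self hm)
    rw [← neg_mul, ← eq_neg_of_add_eq_zero_left key, mul_assoc, Matrix.mul_nonsing_inv _ hu,
      mul_one]
  rw [← h1]
  exact hd hm

theorem MatII.sum_abs [Fintype ι] [Fintype κ] {A : ℝ → Matrix ι κ ℝ} (hA : MatII A a b) :
    IntervalIntegrable (fun t => 2 * ∑ i, ∑ j, |A t i j|) volume a b := by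
  refine IntervalIntegrable.const_mul ?_ 2
  have := IntervalIntegrable.sum (μ := volume) (a := a) (b := b) Finset.univ
    (f := fun i t => ∑ j, |A t i j|) fun i _ => by
      have := IntervalIntegrable.sum (μ := volume) (a := a) (b := b) Finset.univ
        (f := fun j t => |A t i j|) fun j _ => (hA i j).abs
      simpa [Finset.sum_fn] using this
  simpa [Finset.sum_fn] using this

/-- The derivative of `∑ᵢⱼ Xᵢⱼ²` along `X' = A X` is bounded by `2 ∑ᵢⱼ |Aᵢⱼ|` times that sum. -/
theorem abs_sum_mul_le [Fintype ι] [Fintype κ] (A : Matrix ι ι ℝ) (X : Matrix ι κ ℝ) :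
    |∑ i, ∑ j, ((A * X) i j * X i j + X i j * (A * X) i j)| ≤
      (2 * ∑ i, ∑ j, |A i j|) * ∑ i, ∑ j, X i j * X i j := by
  set u := ∑ i, ∑ j, X i j * X i j
  have hrow : ∀ i, ∑ j, X i j * X i j ≤ u := fun i =>
    Finset.single_le_sum (f := fun i => ∑ j, X i j * X i j)
      (fun k _ => Finset.sum_nonneg fun j _ => mul_self_nonneg _) (Finset.mem_univ i)
  have e : ∑ i, ∑ j, ((A * X) i j * X i j + X i j * (A * X) i j) =
      ∑ i, ∑ k, A i k * ∑ j, 2 * (X k j * X i j) := by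
    refine Finset.sum_congr rfl fun i _ => ?_
    simp only [Matrix.mul_apply, Finset.mul_sum, Finset.sum_mul, ← Finset.sum_add_distrib]
    rw [Finset.sum_comm]
    exact Finset.sum_congr rfl fun k _ => Finset.sum_congr rfl fun j _ => by ring
  rw [e, mul_assoc, mul_comm 2, mul_assoc, Finset.sum_mul]
  refine (Finset.abs_sum_le_sum_abs _ _).trans (Finset.sum_le_sum fun i _ => ?_)
  rw [Finset.sum_mul]
  refine (Finset.abs_sum_le_sum_abs _ _).trans (Finset.sum_le_sum fun k _ => ?_)
  rw [abs_mul]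
  refine mul_le_mul_of_nonneg_left ?_ (abs_nonneg _)
  calc |∑ j, 2 * (X k j * X i j)| ≤ ∑ j, (X k j * X k j + X i j * X i j) := by
        refine (Finset.abs_sum_le_sum_abs _ _).trans (Finset.sum_le_sum fun j _ => ?_)
        rw [abs_le]
        constructor <;> nlinarith [sq_nonneg (X k j + X i j), sq_nonneg (X k j - X i j)]
    _ ≤ u * 2 := by
        rw [Finset.sum_add_distrib]
        linarith [hrow k, hrow i]

/-- Uniqueness for the linear equation `X' = A X` with integrable coefficient. -/
theorem MACD.eq_zero [Fintype ι] [Fintype κ] {A : ℝ → Matrix ι ι ℝ} {X : ℝ → Matrix ι κ ℝ}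
    (hX : MACD X (fun t => A t * X t) a b) (hab : a ≤ b) (hA : MatII A a b) {c : ℝ}
    (hc : c ∈ Icc a b) (h0 : X c = 0) : ∀ t ∈ Icc a b, X t = 0 := by
  intro t ht
  have hu := ACD.sum Finset.univ fun i _ => ACD.sum Finset.univ fun j _ => (hX i j).mul (hX i j)
  have hz := hu.eq_zero_of_abs_le hab hc hA.sum_abs
    (fun t _ => Finset.sum_nonneg fun i _ => Finset.sum_nonneg fun j _ => mul_self_nonneg _)
    (fun t _ => abs_sum_mul_le (A t) (X t)) (by simp [h0]) t ht
  ext i j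
  have h1 := (Finset.sum_eq_zero_iff_of_nonneg
    (fun i _ => Finset.sum_nonneg fun j _ => mul_self_nonneg _)).1 hz i (Finset.mem_univ i)
  have h2 := (Finset.sum_eq_zero_iff_of_nonneg (fun j _ => mul_self_nonneg _)).1 h1 j
    (Finset.mem_univ j)
  exact mul_self_eq_zero.1 h2

theorem IsTransition.macd [Fintype ι] [DecidableEq ι] {A : ℝ → Matrix ι ι ℝ}
    {Φ : ℝ → ℝ → Matrix ι ι ℝ} (h : IsTransition a b A Φ) (hab : a ≤ b) {t : ℝ}
    (ht : t ∈ Icc a b) : MACD (fun s => Φ s t) (fun s => A s * Φ s t) a b :=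
  MACD.of_integral hab ht (h t ht).2.1 (h t ht).2.2

theorem IsTransition.self [Fintype ι] [DecidableEq ι] {A : ℝ → Matrix ι ι ℝ}
    {Φ : ℝ → ℝ → Matrix ι ι ℝ} (h : IsTransition a b A Φ) {t : ℝ}
    (ht : t ∈ Icc a b) : Φ t t = 1 := by
  rw [(h t ht).2.2 t ht]
  ext i j
  simp [matInt]

/-- The cocycle property, from uniqueness for `x' = A x`. -/
theorem IsTransition.comp [Fintype ι] [DecidableEq ι] {A : ℝ → Matrix ι ι ℝ}
    {Φ : ℝ → ℝ → Matrix ι ι ℝ} (h : IsTransition a b A Φ) (hab : a ≤ b) (hA : MatII A a b)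
    {s t u : ℝ} (hs : s ∈ Icc a b) (ht : t ∈ Icc a b) (hu : u ∈ Icc a b) :
    Φ s t * Φ t u = Φ s u := by
  have h1 := ((h.macd hab ht).mul (MACD.const (Φ t u))).sub (h.macd hab hu)
  have h2 := h1.congr (Y' := fun τ => A τ * (Φ τ t * Φ t u - Φ τ u)) fun τ _ => by
    rw [mul_zero, add_zero, mul_assoc, ← mul_sub]
  exact sub_eq_zero.1 (h2.eq_zero hab hA ht (by rw [h.self ht, one_mul, sub_self]) s hs)

end MACD

/-! ### Integrability of the coefficients -/

section Integrability

variable {ι κ l : Type*} {a b : ℝ}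

theorem MatII.mul_cont [Fintype κ] {A : ℝ → Matrix ι κ ℝ} {B : ℝ → Matrix κ l ℝ} (hab : a ≤ b)
    (hA : MatII A a b) (hB : MatContOn B (Icc a b)) : MatII (fun t => A t * B t) a b := fun i j => by
  have := IntervalIntegrable.sum (μ := volume) (a := a) (b := b) Finset.univ
    (f := fun k t => A t i k * B t k j) fun k _ =>
      (hA i k).mul_continuousOn (by rw [uIcc_of_le hab]; exact hB k j)
  simpa [Finset.sum_fn, Matrix.mul_apply] using this

theorem MatII.cont_mul [Fintype κ] {A : ℝ → Matrix ι κ ℝ} {B : ℝ → Matrix κ l ℝ} (hab : a ≤ b)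
    (hA : MatContOn A (Icc a b)) (hB : MatII B a b) : MatII (fun t => A t * B t) a b := fun i j => by
  have := IntervalIntegrable.sum (μ := volume) (a := a) (b := b) Finset.univ
    (f := fun k t => A t i k * B t k j) fun k _ =>
      (hB k j).continuousOn_mul (by rw [uIcc_of_le hab]; exact hA i k)
  simpa [Finset.sum_fn, Matrix.mul_apply] using this

theorem MatII.add {A B : ℝ → Matrix ι κ ℝ} (hA : MatII A a b) (hB : MatII B a b) :
    MatII (fun t => A t + B t) a b := fun i j => (hA i j).add (hB i j)

theorem MatII.sub {A B : ℝ → Matrix ι κ ℝ} (hA : MatII A a b) (hB : MatII B a b) :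
    MatII (fun t => A t - B t) a b := fun i j => (hA i j).sub (hB i j)

theorem MatII.transpose {A : ℝ → Matrix ι κ ℝ} (hA : MatII A a b) :
    MatII (fun t => (A t)ᵀ) a b := fun i j => hA j i

theorem isHermitian_of_sub_smul_one [Fintype ι] [DecidableEq ι] {M : Matrix ι ι ℝ} {r : ℝ}
    (h : (M - r • (1 : Matrix ι ι ℝ)).PosSemidef) : Mᵀ = M := by
  have h1 := h.isHermitian
  have h2 : (M - r • (1 : Matrix ι ι ℝ))ᵀ = M - r • (1 : Matrix ι ι ℝ) := by
    rw [← Matrix.conjTranspose_eq_transpose_of_trivial]; exact h1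
  simpa using h2

theorem mul_dotProduct_le [Fintype ι] [DecidableEq ι] {M : Matrix ι ι ℝ} {r : ℝ}
    (h : (M - r • (1 : Matrix ι ι ℝ)).PosSemidef) (v : ι → ℝ) :
    r * (v ⬝ᵥ v) ≤ v ⬝ᵥ (M *ᵥ v) := by
  have := h.dotProduct_mulVec_nonneg v
  simp only [star_trivial, Matrix.sub_mulVec, Matrix.smul_mulVec, Matrix.one_mulVec,
    dotProduct_sub, dotProduct_smul, smul_eq_mul] at this
  linarith

/-- If `M ⪰ r I` with `r > 0`, the entries of `M⁻¹` are bounded by `1/r`: testing `M ⪰ r I` on a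
column `v = M⁻¹ e_j` gives `r |v|² ≤ v_j`. -/
theorem abs_inv_apply_le [Fintype ι] [DecidableEq ι] {M : Matrix ι ι ℝ} {r : ℝ} (hr : 0 < r)
    (h : (M - r • (1 : Matrix ι ι ℝ)).PosSemidef) (i j : ι) : |M⁻¹ i j| ≤ 1 / r := by
  have hu : IsUnit M.det := by
    rw [isUnit_iff_ne_zero]
    intro h0
    obtain ⟨v, hv, hv0⟩ := Matrix.exists_mulVec_eq_zero_iff.2 h0
    have h1 := mul_dotProduct_le h v
    rw [hv0, dotProduct_zero] at h1
    have h2 : 0 < v ⬝ᵥ v := lt_of_le_of_ne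
      (Finset.sum_nonneg fun i _ => mul_self_nonneg _) (fun e => hv (dotProduct_self_eq_zero.1 e.symm))
    nlinarith
  set v : ι → ℝ := fun k => M⁻¹ k j with hv
  have hMv : M *ᵥ v = Pi.single j 1 := by
    ext k
    have := congrFun (congrFun (Matrix.mul_nonsing_inv M hu) k) j
    rw [Matrix.mul_apply] at this
    simpa [Matrix.mulVec, dotProduct, hv, Matrix.one_apply, Pi.single_apply] using this
  have h1 := mul_dotProduct_le h v
  rw [hMv, dotProduct_single, mul_one] at h1
  have hle : ∀ k, v k * v k ≤ v ⬝ᵥ v := fun k =>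
    Finset.single_le_sum (f := fun k => v k * v k) (fun k _ => mul_self_nonneg _) (Finset.mem_univ k)
  have hj : r * (v j * v j) ≤ v j := (mul_le_mul_of_nonneg_left (hle j) hr.le).trans h1
  have hi : r * (v i * v i) ≤ v j := (mul_le_mul_of_nonneg_left (hle i) hr.le).trans h1
  have hj' : r * v j ≤ 1 := by
    by_contra! hc
    nlinarith
  have h3 : (r * |v i|) ^ 2 ≤ 1 ^ 2 := by
    rw [mul_pow, sq_abs]
    nlinarith
  rw [le_div_iff₀ hr, mul_comm]
  exact le_of_sq_le_sq h3 zero_le_one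

end Integrability

/-- `H* R⁻¹ H` is integrable: the entries of `R⁻¹` are bounded and those of `H` are square
integrable. -/
theorem hrh_matII {n m : ℕ} {a b r : ℝ} (hab : a ≤ b) (hr : 0 < r)
    {H : ℝ → Matrix (Fin m) (Fin n) ℝ} {R : ℝ → Matrix (Fin m) (Fin m) ℝ}
    (hH : MatL2 H a b) (hR : MatL2 R a b)
    (hRbd : ∀ t ∈ Icc a b, (R t - r • (1 : Matrix (Fin m) (Fin m) ℝ)).PosSemidef) :
    MatII (hrh H R) a b := by
  have hmeas : ∀ k l, AEMeasurable (fun t => (R t)⁻¹ k l) (volume.restrict (Ioc a b)) := by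
    intro k l
    have h1 : AEMeasurable (fun t => fun i j => R t i j) (volume.restrict (Ioc a b)) :=
      aemeasurable_pi_iff.2 fun i => aemeasurable_pi_iff.2 fun j =>
        (((intervalIntegrable_iff_integrableOn_Ioc_of_le hab).1 (hR i j).1).aestronglyMeasurable).aemeasurable
    have h2 : Measurable (fun M : Fin m → Fin m → ℝ => (Matrix.of M)⁻¹ k l) := by
      simp only [Matrix.inv_def, Ring.inverse_eq_inv', Matrix.smul_apply, smul_eq_mul]
      refine Measurable.mul (Measurable.inv (Continuous.measurable ?_)) (Continuous.measurable ?_)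
      · exact Continuous.matrix_det (continuous_id (X := Fin m → Fin m → ℝ))
      · exact (Continuous.matrix_adjugate (continuous_id (X := Fin m → Fin m → ℝ))).matrix_elem k l
    exact h2.comp_aemeasurable h1
  have hterm : ∀ i k l j, IntervalIntegrable (fun t => H t k i * (R t)⁻¹ k l * H t l j) volume a b := by
    intro i k l j
    have hm := fun p q => (((intervalIntegrable_iff_integrableOn_Ioc_of_le hab).1
      (hH p q).1).aestronglyMeasurable).aemeasurable
    rw [intervalIntegrable_iff_integrableOn_Ioc_of_le hab]
    refine Integrable.mono' ((((intervalIntegrable_iff_integrableOn_Ioc_of_le hab).1 (hH k i).2).add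
      ((intervalIntegrable_iff_integrableOn_Ioc_of_le hab).1 (hH l j).2)).const_mul (1 / r))
      (((hm k i).mul (hmeas k l)).mul (hm l j)).aestronglyMeasurable ?_
    filter_upwards [ae_restrict_mem measurableSet_Ioc] with t ht
    have h1 := abs_inv_apply_le hr (hRbd t (Ioc_subset_Icc_self ht)) k l
    have h2 : |H t k i| * |H t l j| ≤ H t k i ^ 2 + H t l j ^ 2 := by
      rw [← sq_abs (H t k i), ← sq_abs (H t l j)]
      nlinarith [sq_nonneg (|H t k i| - |H t l j|), sq_nonneg (|H t k i|), sq_nonneg (|H t l j|)]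
    calc ‖H t k i * (R t)⁻¹ k l * H t l j‖ = |(R t)⁻¹ k l| * (|H t k i| * |H t l j|) := by
          rw [Real.norm_eq_abs, abs_mul, abs_mul]; ring
      _ ≤ 1 / r * (H t k i ^ 2 + H t l j ^ 2) := by gcongr
  intro i j
  have := IntervalIntegrable.sum (μ := volume) (a := a) (b := b) Finset.univ
    (f := fun l t => ∑ k, H t k i * (R t)⁻¹ k l * H t l j) fun l _ => by
      have := IntervalIntegrable.sum (μ := volume) (a := a) (b := b) Finset.univ
        (f := fun k t => H t k i * (R t)⁻¹ k l * H t l j) fun k _ => hterm i k l j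
      simpa [Finset.sum_fn] using this
  simpa [Finset.sum_fn, hrh, Matrix.mul_apply, Finset.sum_mul] using this

/-! ### The two Riccati equations and their transition matrices -/

section Riccati

variable {n : ℕ} {a b : ℝ} {F B C P S X V : ℝ → Matrix (Fin n) (Fin n) ℝ}

theorem MACD.inv_of_linear {ι : Type*} [Fintype ι] [DecidableEq ι] {X A : ℝ → Matrix ι ι ℝ}
    (hX : MACD X (fun t => A t * X t) a b) (hab : a ≤ b) (h0 : ∀ t ∈ Icc a b, IsUnit (X t).det) :
    MACD (fun t => (X t)⁻¹) (fun t => -((X t)⁻¹ * A t)) a b :=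
  (hX.inv hab h0).congr fun t ht => by
    rw [mul_assoc, mul_assoc, Matrix.mul_nonsing_inv _ (h0 t ht), mul_one]

/-- `E = P - P*` satisfies `E' = DE + ED*` with `D = F - PC`, hence `V⁻¹ E V⁻*` is constant. -/
theorem fwd_symm (hab : a ≤ b) (hB : ∀ t ∈ Icc a b, (B t)ᵀ = B t) (hC : ∀ t ∈ Icc a b, (C t)ᵀ = C t)
    (hP : MACD P (fun t => F t * P t + P t * (F t)ᵀ - P t * C t * P t + B t) a b)
    (hPa : (P a)ᵀ = P a) (hV : MACD V (fun t => (F t - P t * C t) * V t) a b)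
    (hVu : ∀ t ∈ Icc a b, IsUnit (V t).det) : ∀ t ∈ Icc a b, (P t)ᵀ = P t := by
  intro t ht
  have hVi := hV.inv_of_linear hab hVu
  have hE := (hVi.mul (hP.sub hP.transpose)).mul hVi.transpose
  have hc := hE.eq_of_deriv_eq_zero hab (fun τ hτ => by
    simp only [transpose_add, transpose_sub, transpose_mul, transpose_neg, transpose_transpose,
      hB τ hτ, hC τ hτ]
    noncomm_ring) ht (left_mem_Icc.2 hab)
  simp only [hPa, sub_self, mul_zero, zero_mul] at hc
  have hVV := Matrix.mul_nonsing_inv _ (hVu t ht)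
  have hVV' : ((V t)⁻¹)ᵀ * (V t)ᵀ = 1 := by rw [← transpose_mul, hVV, transpose_one]
  have : P t - (P t)ᵀ = V t * ((V t)⁻¹ * (P t - (P t)ᵀ) * ((V t)⁻¹)ᵀ) * (V t)ᵀ := by
    rw [mul_assoc, mul_assoc _ ((V t)⁻¹)ᵀ, hVV', mul_one, ← mul_assoc, hVV, one_mul]
  rw [hc, mul_zero, zero_mul] at this
  exact (sub_eq_zero.1 this).symm

/-- `E = S - S*` satisfies `-E' = EA + A*E` with `A = F - BS`, hence `X* E X` is constant. -/
theorem bwd_symm (hab : a ≤ b) (hB : ∀ t ∈ Icc a b, (B t)ᵀ = B t) (hC : ∀ t ∈ Icc a b, (C t)ᵀ = C t)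
    (hS : MACD S (fun t => -(S t * F t + (F t)ᵀ * S t - S t * B t * S t + C t)) a b)
    (hSb : S b = 0) (hX : MACD X (fun t => (F t - B t * S t) * X t) a b)
    (hXu : ∀ t ∈ Icc a b, IsUnit (X t).det) : ∀ t ∈ Icc a b, (S t)ᵀ = S t := by
  intro t ht
  have hE := (hX.transpose.mul (hS.sub hS.transpose)).mul hX
  have hc := hE.eq_of_deriv_eq_zero hab (fun τ hτ => by
    simp only [transpose_add, transpose_sub, transpose_mul, transpose_neg, transpose_transpose,
      hB τ hτ, hC τ hτ]
    noncomm_ring) ht (right_mem_Icc.2 hab)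
  simp only [hSb, transpose_zero, sub_self, mul_zero, zero_mul] at hc
  have hXX := Matrix.mul_nonsing_inv _ (hXu t ht)
  have hXX' : ((X t)⁻¹)ᵀ * (X t)ᵀ = 1 := by rw [← transpose_mul, hXX, transpose_one]
  have : S t - (S t)ᵀ = ((X t)⁻¹)ᵀ * ((X t)ᵀ * (S t - (S t)ᵀ) * X t) * (X t)⁻¹ := by
    rw [mul_assoc, mul_assoc _ (X t), hXX, mul_one, ← mul_assoc, hXX', one_mul]
  rw [hc, mul_zero, zero_mul] at this
  exact (sub_eq_zero.1 this).symm

/-- `Z = I + PS` satisfies `Z' = DZ - ZA`, hence `Z X = V N` with `N = Z(a)`. -/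
theorem Z_intertwine (hab : a ≤ b)
    (hP : MACD P (fun t => F t * P t + P t * (F t)ᵀ - P t * C t * P t + B t) a b)
    (hS : MACD S (fun t => -(S t * F t + (F t)ᵀ * S t - S t * B t * S t + C t)) a b)
    (hX : MACD X (fun t => (F t - B t * S t) * X t) a b) (hXa : X a = 1)
    (hV : MACD V (fun t => (F t - P t * C t) * V t) a b) (hVa : V a = 1)
    (hVu : ∀ t ∈ Icc a b, IsUnit (V t).det) :
    ∀ t ∈ Icc a b, (1 + P t * S t) * X t = V t * (1 + P a * S a) := by
  intro t ht
  have hE := ((hV.inv_of_linear hab hVu).mul ((MACD.const 1).add (hP.mul hS))).mul hX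
  have hc := hE.eq_of_deriv_eq_zero hab (fun τ hτ => by noncomm_ring) ht (left_mem_Icc.2 hab)
  rw [hVa, hXa, inv_one, one_mul, mul_one] at hc
  rw [← hc, mul_assoc, ← mul_assoc (V t), Matrix.mul_nonsing_inv _ (hVu t ht), one_mul]

/-- With `A = F - BS`, `(V⁻¹ P X⁻*)' = V⁻¹ (I + PS) B X⁻* = N X⁻¹ B X⁻*`. -/
theorem K_primitive (hab : a ≤ b) (hB : ∀ t ∈ Icc a b, (B t)ᵀ = B t)
    (hSs : ∀ t ∈ Icc a b, (S t)ᵀ = S t)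
    (hP : MACD P (fun t => F t * P t + P t * (F t)ᵀ - P t * C t * P t + B t) a b)
    (hX : MACD X (fun t => (F t - B t * S t) * X t) a b)
    (hXu : ∀ t ∈ Icc a b, IsUnit (X t).det)
    (hV : MACD V (fun t => (F t - P t * C t) * V t) a b)
    (hVu : ∀ t ∈ Icc a b, IsUnit (V t).det) {N : Matrix (Fin n) (Fin n) ℝ}
    (hZ : ∀ t ∈ Icc a b, (1 + P t * S t) * X t = V t * N) :
    MACD (fun t => (V t)⁻¹ * P t * ((X t)⁻¹)ᵀ)
      (fun t => N * ((X t)⁻¹ * B t * ((X t)⁻¹)ᵀ)) a b := by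
  refine (((hV.inv_of_linear hab hVu).mul hP).mul
    (hX.inv_of_linear hab hXu).transpose).congr fun t ht => ?_
  have h1 : (V t)⁻¹ * (1 + P t * S t) = N * (X t)⁻¹ := by
    calc (V t)⁻¹ * (1 + P t * S t) = (V t)⁻¹ * ((1 + P t * S t) * X t) * (X t)⁻¹ := by
          rw [mul_assoc, mul_assoc _ (X t), Matrix.mul_nonsing_inv _ (hXu t ht), mul_one]
      _ = N * (X t)⁻¹ := by
          rw [hZ t ht, ← mul_assoc (V t)⁻¹, Matrix.nonsing_inv_mul _ (hVu t ht), one_mul]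
  rw [← mul_assoc N, ← mul_assoc N, ← h1]
  simp only [transpose_sub, transpose_mul, transpose_neg, hB t ht, hSs t ht]
  noncomm_ring

/-- With `D = F - PC`, `(V* S X)' = -V* C (I + PS) X = -V* C V N`. -/
theorem L_primitive (hC : ∀ t ∈ Icc a b, (C t)ᵀ = C t)
    (hPs : ∀ t ∈ Icc a b, (P t)ᵀ = P t)
    (hS : MACD S (fun t => -(S t * F t + (F t)ᵀ * S t - S t * B t * S t + C t)) a b)
    (hX : MACD X (fun t => (F t - B t * S t) * X t) a b)
    (hV : MACD V (fun t => (F t - P t * C t) * V t) a b) {N : Matrix (Fin n) (Fin n) ℝ}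
    (hZ : ∀ t ∈ Icc a b, (1 + P t * S t) * X t = V t * N) :
    MACD (fun t => (V t)ᵀ * S t * X t) (fun t => -((V t)ᵀ * C t * V t * N)) a b := by
  refine ((hV.transpose.mul hS).mul hX).congr fun t ht => ?_
  rw [mul_assoc _ (V t) N, ← hZ t ht]
  simp only [transpose_sub, transpose_mul, hC t ht, hPs t ht]
  noncomm_ring

end Riccati

/-- The push-through identity `P^{1/2}(I + P^{1/2} S P^{1/2})⁻¹ P^{1/2} = (I + P S)⁻¹ P`. -/
theorem push_through {n : ℕ} {P0 P0h S0 Ni : Matrix (Fin n) (Fin n) ℝ} (h : P0h * P0h = P0)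
    (hu : (1 + P0 * S0) * Ni = 1) :
    P0h * (1 + P0h * S0 * P0h)⁻¹ * P0h = Ni * P0 := by
  have hdet : IsUnit (1 + P0h * S0 * P0h).det := by
    rw [mul_assoc, Matrix.det_one_add_mul_comm, mul_assoc, h, Matrix.det_one_add_mul_comm]
    exact Matrix.isUnit_det_of_right_inverse hu
  have h1 : (1 + P0 * S0) * P0h = P0h * (1 + P0h * S0 * P0h) := by rw [← h]; noncomm_ring
  have h2 : Ni * (1 + P0 * S0) = 1 := mul_eq_one_comm.1 hu
  have h3 : P0h * (1 + P0h * S0 * P0h)⁻¹ = Ni * P0h := by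
    calc P0h * (1 + P0h * S0 * P0h)⁻¹
        = Ni * (1 + P0 * S0) * P0h * (1 + P0h * S0 * P0h)⁻¹ := by rw [h2, one_mul]
      _ = Ni * (P0h * (1 + P0h * S0 * P0h)) * (1 + P0h * S0 * P0h)⁻¹ := by rw [mul_assoc Ni, h1]
      _ = Ni * P0h := by
        rw [mul_assoc, mul_assoc P0h, Matrix.mul_nonsing_inv _ hdet, mul_one]
  rw [h3, mul_assoc, h]

/-! ### Assembling the identity -/

section Assembly

variable {n : ℕ}

/-- For symmetric `P, S` and `W = (I + PS)⁻¹` one has `W* = I - S W P`. -/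
theorem transpose_inv_eq {P S W : Matrix (Fin n) (Fin n) ℝ} (hP : Pᵀ = P) (hS : Sᵀ = S)
    (hW : (1 + P * S) * W = 1) : Wᵀ = 1 - S * W * P := by
  have h1 : Wᵀ * (1 + S * P) = 1 := by
    have := congrArg Matrix.transpose hW
    simpa only [transpose_mul, transpose_add, transpose_one, hP, hS] using this
  have h2 : (1 + S * P) * (1 - S * W * P) = 1 := by
    calc (1 + S * P) * (1 - S * W * P) = 1 + S * P - S * ((1 + P * S) * W) * P := by noncomm_ring
      _ = 1 := by rw [hW, mul_one]; abel
  calc Wᵀ = Wᵀ * ((1 + S * P) * (1 - S * W * P)) := by rw [h2, mul_one]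
    _ = 1 - S * W * P := by rw [← mul_assoc, h1, one_mul]

/-- For symmetric `P, S` and `W = (I + PS)⁻¹`, the product `W P` is symmetric. -/
theorem inv_mul_symm {P S W : Matrix (Fin n) (Fin n) ℝ} (hP : Pᵀ = P) (hS : Sᵀ = S)
    (hW : (1 + P * S) * W = 1) : W * P = P * Wᵀ := by
  have h3 : P * S * W = 1 - W := by rw [← hW]; noncomm_ring
  rw [transpose_inv_eq hP hS hW]
  calc W * P = P - (1 - W) * P := by noncomm_ring
    _ = P * (1 - S * W * P) := by rw [← h3]; noncomm_ring

/-- The values of `Z = I + PS` are invertible with inverse `X N⁻¹ V⁻¹`. -/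
theorem Z_inv {P S X V N Ni : Matrix (Fin n) (Fin n) ℝ} (hZ : (1 + P * S) * X = V * N)
    (hN : N * Ni = 1) (hV : IsUnit V.det) : (1 + P * S) * (X * Ni * V⁻¹) = 1 := by
  rw [← mul_assoc, ← mul_assoc, hZ, mul_assoc V, hN, mul_one, Matrix.mul_nonsing_inv _ hV]

/-- The identity for `s ≤ t`; the subscripts denote the values at `s` and `t`. -/
theorem identity_le {Ps Ss Xs Vs Pt St Xt Vt N Ni : Matrix (Fin n) (Fin n) ℝ}
    (hPs : Psᵀ = Ps) (hSs : Ssᵀ = Ss) (hPt : Ptᵀ = Pt) (hSt : Stᵀ = St)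
    (hZs : (1 + Ps * Ss) * Xs = Vs * N) (hZt : (1 + Pt * St) * Xt = Vt * N) (hN : N * Ni = 1)
    (hXs : IsUnit Xs.det) (hVs : IsUnit Vs.det) (hVt : IsUnit Vt.det) :
    Xs * Ni * (Vs⁻¹ * Ps * (Xs⁻¹)ᵀ) * Xtᵀ =
      Ps * (Vt * Vs⁻¹)ᵀ - Ps * ((Vs⁻¹)ᵀ * (Vtᵀ * St * Xt * Ni) * Vt⁻¹) * Pt := by
  have hWs := inv_mul_symm hPs hSs (Z_inv hZs hN hVs)
  have hWt := transpose_inv_eq hPt hSt (Z_inv hZt hN hVt)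
  have e1 : Xs⁻¹ * (Xs * Ni * Vs⁻¹) = Ni * Vs⁻¹ := by
    rw [← mul_assoc, ← mul_assoc, Matrix.nonsing_inv_mul _ hXs, one_mul]
  have e2 : Xt * Ni * Vt⁻¹ * Vt = Xt * Ni := by
    rw [mul_assoc, Matrix.nonsing_inv_mul _ hVt, mul_one]
  calc Xs * Ni * (Vs⁻¹ * Ps * (Xs⁻¹)ᵀ) * Xtᵀ
      = (Xs * Ni * Vs⁻¹ * Ps) * (Xs⁻¹)ᵀ * Xtᵀ := by simp only [mul_assoc]
    _ = Ps * (Xs⁻¹ * (Xs * Ni * Vs⁻¹))ᵀ * Xtᵀ := by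
        rw [hWs, transpose_mul Xs⁻¹]; simp only [mul_assoc]
    _ = Ps * (Vs⁻¹)ᵀ * (Xt * Ni * Vt⁻¹ * Vt)ᵀ := by
        rw [e1, e2, transpose_mul, transpose_mul]; simp only [mul_assoc]
    _ = Ps * (Vs⁻¹)ᵀ * (Vtᵀ * (1 - St * (Xt * Ni * Vt⁻¹) * Pt)) := by rw [← hWt, transpose_mul]
    _ = _ := by rw [transpose_mul]; noncomm_ring

/-- The identity for `t < s`; the subscripts denote the values at `s` and `t`. -/
theorem identity_gt {Ps Ss Xs Vs Pt Xt Vt N Ni : Matrix (Fin n) (Fin n) ℝ}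
    (hZs : (1 + Ps * Ss) * Xs = Vs * N) (hN : N * Ni = 1)
    (hXt : IsUnit Xt.det) (hVs : IsUnit Vs.det) :
    Xs * Ni * (Vt⁻¹ * Pt * (Xt⁻¹)ᵀ) * Xtᵀ =
      Vs * Vt⁻¹ * Pt - Ps * ((Vs⁻¹)ᵀ * (Vsᵀ * Ss * Xs * Ni) * Vt⁻¹) * Pt := by
  have e1 : (Xt⁻¹)ᵀ * Xtᵀ = 1 := by
    rw [← transpose_mul, Matrix.mul_nonsing_inv _ hXt, transpose_one]
  have e2 : (Vs⁻¹)ᵀ * Vsᵀ = 1 := by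
    rw [← transpose_mul, Matrix.mul_nonsing_inv _ hVs, transpose_one]
  have e3 : (1 + Ps * Ss) * Xs * Ni = Vs := by rw [hZs, mul_assoc, hN, mul_one]
  calc Xs * Ni * (Vt⁻¹ * Pt * (Xt⁻¹)ᵀ) * Xtᵀ
      = Xs * Ni * Vt⁻¹ * Pt * ((Xt⁻¹)ᵀ * Xtᵀ) := by simp only [mul_assoc]
    _ = (1 + Ps * Ss) * Xs * Ni * Vt⁻¹ * Pt - Ps * (1 * Ss * Xs * Ni * Vt⁻¹) * Pt := by
        rw [e1]; noncomm_ring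
    _ = _ := by rw [e3, ← e2]; simp only [mul_assoc]

/-- Both kernels evaluated through the primitives `V⁻¹ P X⁻*` and `V* S X`, for abstract symmetric
coefficients `B` and `C` in place of `GQG*` and `H*R⁻¹H`. -/
theorem bryson_frazier {a b : ℝ} (hab : a ≤ b) {F B C P S : ℝ → Matrix (Fin n) (Fin n) ℝ}
    {ΦS ΦP : ℝ → ℝ → Matrix (Fin n) (Fin n) ℝ} {P0 P0h : Matrix (Fin n) (Fin n) ℝ}
    (hF : MatII F a b) (hBi : MatII B a b) (hCi : MatII C a b)
    (hB : ∀ t ∈ Icc a b, (B t)ᵀ = B t) (hC : ∀ t ∈ Icc a b, (C t)ᵀ = C t)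
    (hP : MACD P (fun t => F t * P t + P t * (F t)ᵀ - P t * C t * P t + B t) a b)
    (hPc : MatContOn P (Icc a b)) (hPa : P a = P0) (hP0 : P0ᵀ = P0) (hP0h : P0h * P0h = P0)
    (hS : MACD S (fun t => -(S t * F t + (F t)ᵀ * S t - S t * B t * S t + C t)) a b)
    (hSc : MatContOn S (Icc a b)) (hSb : S b = 0)
    (hΦS : IsTransition a b (fun t => F t - B t * S t) ΦS)
    (hΦP : IsTransition a b (fun t => F t - P t * C t) ΦP)
    {s t : ℝ} (hs : s ∈ Icc a b) (ht : t ∈ Icc a b) :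
    ΦS s a * P0h * (1 + P0h * S a * P0h)⁻¹ * P0h * (ΦS t a)ᵀ +
        matInt (fun τ => ΦS s τ * B τ * (ΦS t τ)ᵀ) a (min s t) =
      (if s ≤ t then P s * (ΦP t s)ᵀ else ΦP s t * P t) -
        P s * matInt (fun τ => (ΦP τ s)ᵀ * C τ * ΦP τ t) (max s t) b * P t := by
  have ha : a ∈ Icc a b := left_mem_Icc.2 hab
  have hb : b ∈ Icc a b := right_mem_Icc.2 hab
  have hmin : min s t ∈ Icc a b := ⟨le_min hs.1 ht.1, (min_le_left _ _).trans hs.2⟩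
  have hmax : max s t ∈ Icc a b := ⟨hs.1.trans (le_max_left _ _), max_le hs.2 ht.2⟩
  have hAi := hF.sub (hBi.mul_cont hab hSc)
  have hDi := hF.sub (MatII.cont_mul hab hPc hCi)
  set X : ℝ → Matrix (Fin n) (Fin n) ℝ := fun τ => ΦS τ a with hXdef
  set V : ℝ → Matrix (Fin n) (Fin n) ℝ := fun τ => ΦP τ a with hVdef
  have hX : MACD X (fun t => (F t - B t * S t) * X t) a b := hΦS.macd hab ha
  have hV : MACD V (fun t => (F t - P t * C t) * V t) a b := hΦP.macd hab ha
  have hXa : X a = 1 := hΦS.self ha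
  have hVa : V a = 1 := hΦP.self ha
  have hXu : ∀ τ ∈ Icc a b, IsUnit (X τ).det := fun τ hτ =>
    Matrix.isUnit_det_of_right_inverse ((hΦS.comp hab hAi hτ ha hτ).trans (hΦS.self hτ))
  have hVu : ∀ τ ∈ Icc a b, IsUnit (V τ).det := fun τ hτ =>
    Matrix.isUnit_det_of_right_inverse ((hΦP.comp hab hDi hτ ha hτ).trans (hΦP.self hτ))
  have hPs := fwd_symm hab hB hC hP (by rw [hPa, hP0]) hV hVu
  have hSs := bwd_symm hab hB hC hS hSb hX hXu
  have hZ := Z_intertwine hab hP hS hX hXa hV hVa hVu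
  set N := 1 + P a * S a with hN
  -- At the right end `Z = I`, which shows that `N = Z(a)` is invertible.
  have hNi : N * ((X b)⁻¹ * V b) = 1 := by
    have h1 := hZ b hb
    rw [hSb, mul_zero, add_zero, one_mul] at h1
    refine mul_eq_one_comm.1 ?_
    rw [mul_assoc, ← h1, Matrix.nonsing_inv_mul _ (hXu b hb)]
  set Ni := (X b)⁻¹ * V b
  have hNi' : Ni * N = 1 := mul_eq_one_comm.1 hNi
  have hΦSx : ∀ σ ∈ Icc a b, ∀ τ ∈ Icc a b, ΦS σ τ = X σ * (X τ)⁻¹ := fun σ hσ τ hτ => by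
    rw [← mul_one (ΦS σ τ), ← Matrix.mul_nonsing_inv _ (hXu τ hτ), ← mul_assoc]
    exact congrArg (· * _) (hΦS.comp hab hAi hσ hτ ha)
  have hΦPx : ∀ σ ∈ Icc a b, ∀ τ ∈ Icc a b, ΦP σ τ = V σ * (V τ)⁻¹ := fun σ hσ τ hτ => by
    rw [← mul_one (ΦP σ τ), ← Matrix.mul_nonsing_inv _ (hVu τ hτ), ← mul_assoc]
    exact congrArg (· * _) (hΦP.comp hab hDi hσ hτ ha)
  have hK : matInt (fun τ => ΦS s τ * B τ * (ΦS t τ)ᵀ) a (min s t) =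
      X s * Ni * ((V (min s t))⁻¹ * P (min s t) * ((X (min s t))⁻¹)ᵀ) * (X t)ᵀ
        - X s * Ni * P0 * (X t)ᵀ := by
    have h1 := (((MACD.const (X s * Ni)).mul (K_primitive hab hB hSs hP hX hXu hV hVu hZ)).mul
      (MACD.const (X t)ᵀ)).congr (Y' := fun τ => ΦS s τ * B τ * (ΦS t τ)ᵀ) fun τ hτ => by
        rw [hΦSx s hs τ hτ, hΦSx t ht τ hτ, zero_mul, zero_add, mul_zero, add_zero,
          mul_assoc (X s), ← mul_assoc Ni, hNi', one_mul, transpose_mul]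
        simp only [mul_assoc]
    rw [h1.matInt_eq hab ha hmin]
    simp only [hVa, hXa, hPa, inv_one, one_mul, transpose_one, mul_one]
  have hL : matInt (fun τ => (ΦP τ s)ᵀ * C τ * ΦP τ t) (max s t) b =
      ((V s)⁻¹)ᵀ * ((V (max s t))ᵀ * S (max s t) * X (max s t) * Ni) * (V t)⁻¹ := by
    have h1 := (((MACD.const (-((V s)⁻¹)ᵀ)).mul (L_primitive hC hPs hS hX hV hZ)).mul
      (MACD.const (Ni * (V t)⁻¹))).congr (Y' := fun τ => (ΦP τ s)ᵀ * C τ * ΦP τ t) fun τ hτ => by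
        rw [hΦPx τ hτ s hs, hΦPx τ hτ t ht, zero_mul, zero_add, mul_zero, add_zero, neg_mul_neg,
          mul_assoc, mul_assoc _ N, ← mul_assoc N, hNi, one_mul, transpose_mul]
        simp only [mul_assoc]
    rw [h1.matInt_eq hab hmax hb]
    simp only [hSb, mul_zero, zero_mul]
    noncomm_ring
  have hpush := push_through hP0h (Ni := Ni) (S0 := S a) (by rw [← hPa]; exact hNi)
  have hK' : ΦS s a * P0h * (1 + P0h * S a * P0h)⁻¹ * P0h * (ΦS t a)ᵀ = X s * Ni * P0 * (X t)ᵀ := by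
    rw [mul_assoc (ΦS s a), mul_assoc (ΦS s a), hpush, ← mul_assoc]
  rw [hK, hK', hL, add_sub_cancel]
  split_ifs with hst
  · rw [min_eq_left hst, max_eq_right hst, hΦPx t ht s hs]
    exact identity_le (hPs s hs) (hSs s hs) (hPs t ht) (hSs t ht) (hZ s hs) (hZ t ht) hNi
      (hXu s hs) (hVu s hs) (hVu t ht)
  · rw [min_eq_right (le_of_not_ge hst), max_eq_left (le_of_not_ge hst), hΦPx s hs t ht]
    exact identity_gt (hZ s hs) hNi (hXu t ht) (hVu s hs)

end Assembly

/-! ### The extended Bryson–Frazier identity -/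

/-- The extended Bryson–Frazier identity relating `K`, `Λ`, `Π` and `Φ_{F,Π}`
(case `ΣT = 0`). -/
theorem stmt11 {n m d : ℕ} (t0 T r : ℝ) (ht : t0 < T) (hr : 0 < r)
    (F : ℝ → Matrix (Fin n) (Fin n) ℝ) (G : ℝ → Matrix (Fin n) (Fin d) ℝ)
    (Q : ℝ → Matrix (Fin d) (Fin d) ℝ) (H : ℝ → Matrix (Fin m) (Fin n) ℝ)
    (R : ℝ → Matrix (Fin m) (Fin m) ℝ)
    (hF : MatII F t0 T) (hG : MatL2 G t0 T) (hQ : MatII Q t0 T)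
    (hQpsd : ∀ t ∈ Icc t0 T, (Q t).PosSemidef) (hH : MatL2 H t0 T) (hR : MatL2 R t0 T)
    (hRbd : ∀ t ∈ Icc t0 T, (R t - r • (1 : Matrix (Fin m) (Fin m) ℝ)).PosSemidef)
    (P0 : Matrix (Fin n) (Fin n) ℝ) (hP0 : P0.PosSemidef)
    (P0h : Matrix (Fin n) (Fin n) ℝ) (hP0h : P0h.PosSemidef ∧ P0h * P0h = P0)
    (Sg : ℝ → Matrix (Fin n) (Fin n) ℝ) (hSg : SolvesBackRiccati t0 T F G Q H R 0 Sg)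
    (Pm : ℝ → Matrix (Fin n) (Fin n) ℝ) (hPm : SolvesFwdRiccati t0 T F G Q H R P0 Pm)
    (PhiFS PhiFP : ℝ → ℝ → Matrix (Fin n) (Fin n) ℝ)
    (hPhiFS : IsTransition t0 T (fun τ => F τ - gqg G Q τ * Sg τ) PhiFS)
    (hPhiFP : IsTransition t0 T (fun τ => F τ - Pm τ * hrh H R τ) PhiFP) :
    ∀ s ∈ Icc t0 T, ∀ t ∈ Icc t0 T,
      Kker t0 G Q PhiFS Sg P0h s t =
        (if s ≤ t then Pm s * (PhiFP t s)ᵀ else PhiFP s t * Pm t) -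
          Pm s * matInt (fun τ => (PhiFP τ s)ᵀ * hrh H R τ * PhiFP τ t) (max s t) T * Pm t := by
  intro s hs t ht'
  have hC := hrh_matII ht.le hr hH hR hRbd
  obtain ⟨hSc, hSi, hSb, hSe⟩ := hSg
  obtain ⟨hPc, hPi, hPa, hPe⟩ := hPm
  have hB : MatII (gqg G Q) t0 T := by
    have h1 := ((hPi.sub (hF.mul_cont ht.le hPc)).sub (MatII.cont_mul ht.le hPc hF.transpose)).add
      ((MatII.cont_mul ht.le hPc hC).mul_cont ht.le hPc)
    have e : gqg G Q = fun τ => F τ * Pm τ + Pm τ * (F τ)ᵀ - Pm τ * hrh H R τ * Pm τ + gqg G Q τ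
        - F τ * Pm τ - Pm τ * (F τ)ᵀ + Pm τ * hrh H R τ * Pm τ := by
      funext τ
      abel
    rw [e]
    exact h1
  have hPd := MACD.of_integral ht.le (left_mem_Icc.2 ht.le) hPi hPe
  have hSd : MACD Sg (fun τ => -(Sg τ * F τ + (F τ)ᵀ * Sg τ - Sg τ * gqg G Q τ * Sg τ + hrh H R τ))
      t0 T := by
    refine MACD.of_integral (k := 0) ht.le (right_mem_Icc.2 ht.le) (fun i j => (hSi i j).neg) ?_
    intro τ hτ
    rw [hSe τ hτ]
    congr 1
    ext i j
    simp only [matInt, Matrix.of_apply, Matrix.neg_apply]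
    rw [intervalIntegral.integral_neg, ← intervalIntegral.integral_symm]
  have hP0s : P0ᵀ = P0 := by
    rw [← Matrix.conjTranspose_eq_transpose_of_trivial]
    exact hP0.isHermitian
  refine bryson_frazier ht.le hF hB hC (fun τ hτ => ?_) (fun τ hτ => ?_) hPd hPc hPa hP0s hP0h.2
    hSd hSc hSb hPhiFS hPhiFP hs ht'
  · have hQs : (Q τ)ᵀ = Q τ := by
      rw [← Matrix.conjTranspose_eq_transpose_of_trivial]
      exact (hQpsd τ hτ).isHermitian
    simp only [gqg, transpose_mul, transpose_transpose, hQs, Matrix.mul_assoc]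
  · simp only [hrh, transpose_mul, transpose_transpose, Matrix.transpose_nonsing_inv,
      isHermitian_of_sub_smul_one (hRbd τ hτ), Matrix.mul_assoc]

end SDEKernels
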